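/- arXiv:1007.3345 — 3 statements merged into one kernel-verified Lean document; each statement's English description precedes it below -/
import Mathlib

section
/- Let I and I' be subsets of {0,…,s−1}. Then, as subsets of the functions a : M → K, one has A_I ∩ A_{I'} = A_{I∪I'}. In particular (the nontrivial inclusion), if a satisfies the decay condition D(I) and the decay condition D(I'), then a satisfies the decay condition D(I∪I'). -/
open Filter

/-- The index set `M ≅ ℤ^s × ℕ^(d-s)`: functions `n : Fin d → ℤ` with `n i ≥ 0`
for all `i ≥ s`. -/
def Mset (d s : ℕ) : Type := {n : Fin d → ℤ // ∀ i : Fin d, s ≤ (i : ℕ) → 0 ≤ n i}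

/-- The decay condition `D(I)` for a coefficient function `a : M → K`:
there is `λ ∈ (0,1)` such that for every `J ⊆ I`, `|a n| * λ ^ (n_J)` tends to `0`
along the cofinite filter on `M`, where `n_J = ∑_{i ∈ J} n i ∈ ℤ`. -/
def DecayCond {K : Type*} [Field K] (v : AbsoluteValue K ℝ) (d s : ℕ)
    (I : Finset (Fin d)) (a : Mset d s → K) : Prop :=
  ∃ l : ℝ, 0 < l ∧ l < 1 ∧
    ∀ J ⊆ I,
      Tendsto (fun n : Mset d s => v (a n) * l ^ (∑ i ∈ J, n.1 i)) cofinite (nhds 0)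

/-! Split `J ⊆ I ∪ I'` into `J ∩ I` and `J \ I ⊆ I'`. If both decay conditions hold with the same
`λ = r ^ 2`, then `r ^ (j + k) ≤ λ ^ j + λ ^ k` by AM-GM, so `r` witnesses the condition for
`I ∪ I'`. A common `λ` exists because the condition for `J = ∅` says that the coefficients
themselves tend to `0`, and `m ^ k ≤ l ^ k + 1 ^ k` whenever `l ≤ m ≤ 1`: increasing `λ` up to `1`
preserves the condition. -/

lemma zpow_le_zpow_add_zpow {K : Type*} [Semifield K] [LinearOrder K] [IsStrictOrderedRing K]
    {l m u : K} (hl : 0 < l) (hlm : l ≤ m) (hmu : m ≤ u) (k : ℤ) : m ^ k ≤ l ^ k + u ^ k := by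
  have hm : 0 < m := hl.trans_le hlm
  obtain hk | hk := le_total 0 k
  · exact (zpow_le_zpow_left₀ hk hm.le hmu).trans (le_add_of_nonneg_left (zpow_pos hl k).le)
  · have h_anti : m ^ k ≤ l ^ k := by
      simpa only [zpow_neg, inv_inv] using
        inv_anti₀ (zpow_pos hl (-k)) (zpow_le_zpow_left₀ (neg_nonneg.2 hk) hl.le hlm)
    exact h_anti.trans (le_add_of_nonneg_right (zpow_pos (hm.trans_le hmu) k).le)

lemma zpow_add_le_sq_zpow_add_sq_zpow {K : Type*} [Field K] [LinearOrder K]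
    [IsStrictOrderedRing K] {r : K} (hr : r ≠ 0) (j k : ℤ) :
    r ^ (j + k) ≤ (r ^ 2) ^ j + (r ^ 2) ^ k := by
  have sq_zpow (i : ℤ) : (r ^ 2) ^ i = (r ^ i) ^ 2 := by
    simp only [sq, mul_zpow]
  rw [zpow_add₀ hr, sq_zpow, sq_zpow]
  nlinarith [two_mul_le_add_sq (r ^ j) (r ^ k), sq_nonneg (r ^ j), sq_nonneg (r ^ k)]

lemma tendsto_mul_zero_of_le_add {α : Type*} {F : Filter α} {w f g h : α → ℝ}
    (hf : ∀ n, 0 ≤ f n) (hle : ∀ n, f n ≤ g n + h n)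
    (hg : Tendsto (fun n ↦ w n * g n) F (nhds 0)) (hh : Tendsto (fun n ↦ w n * h n) F (nhds 0)) :
    Tendsto (fun n ↦ w n * f n) F (nhds 0) := by
  have hgh : Tendsto (fun n ↦ |w n * g n + w n * h n|) F (nhds 0) := by
    simpa only [add_zero, abs_zero] using (hg.add hh).abs
  refine squeeze_zero_norm (fun n ↦ ?_) hgh
  calc ‖w n * f n‖ = |w n| * f n := by rw [Real.norm_eq_abs, abs_mul, abs_of_nonneg (hf n)]
    _ ≤ |w n| * |g n + h n| := by gcongr; exact (hle n).trans (le_abs_self _)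
    _ = |w n * g n + w n * h n| := by rw [← abs_mul, mul_add]

/-- The decay condition with a fixed base `l` (the `λ` of `DecayCond`), for weights `w` on an
arbitrary index type with integer exponents `x n i`, along an arbitrary filter `F`. -/
def DecaysAtRadius {α ι : Type*} (F : Filter α) (x : α → ι → ℤ) (I : Finset ι) (w : α → ℝ)
    (l : ℝ) : Prop :=
  ∀ J ⊆ I, Tendsto (fun n ↦ w n * l ^ (∑ i ∈ J, x n i)) F (nhds 0)

namespace DecaysAtRadius

variable {α ι : Type*} {F : Filter α} {x : α → ι → ℤ} {I I' : Finset ι} {w : α → ℝ} {l m r : ℝ}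

lemma mono (h : DecaysAtRadius F x I' w l) (hI : I ⊆ I') : DecaysAtRadius F x I w l :=
  fun J hJ ↦ h J (hJ.trans hI)

lemma tendsto_weight (h : DecaysAtRadius F x I w l) : Tendsto w F (nhds 0) := by
  simpa only [Finset.sum_empty, zpow_zero, mul_one] using h ∅ (Finset.empty_subset I)

lemma of_le (h : DecaysAtRadius F x I w l) (hl : 0 < l) (hlm : l ≤ m) (hm : m ≤ 1) :
    DecaysAtRadius F x I w m := fun J hJ ↦ by
  have h_one : Tendsto (fun n ↦ w n * 1 ^ (∑ i ∈ J, x n i)) F (nhds 0) := by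
    simpa only [one_zpow, mul_one] using h.tendsto_weight
  exact tendsto_mul_zero_of_le_add (fun n ↦ zpow_nonneg (hl.le.trans hlm) _)
    (fun n ↦ zpow_le_zpow_add_zpow hl hlm hm _) (h J hJ) h_one

lemma union_of_sq [DecidableEq ι] (hr : 0 < r) (h : DecaysAtRadius F x I w (r ^ 2))
    (h' : DecaysAtRadius F x I' w (r ^ 2)) : DecaysAtRadius F x (I ∪ I') w r := fun J hJ ↦ by
  have h_inter := h (J ∩ I) Finset.inter_subset_right
  have h_sdiff := h' (J \ I) (sdiff_le_iff.2 hJ)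
  refine tendsto_mul_zero_of_le_add (fun n ↦ zpow_nonneg hr.le _) (fun n ↦ ?_) h_inter h_sdiff
  rw [← Finset.sum_inter_add_sum_sdiff J I]
  exact zpow_add_le_sq_zpow_add_sq_zpow hr.ne' _ _

end DecaysAtRadius

theorem inter_decay_eq_union_decay_general {α ι : Type*} [DecidableEq ι] (F : Filter α)
    (x : α → ι → ℤ) (I I' : Finset ι) (w : α → ℝ) :
    ((∃ l, 0 < l ∧ l < 1 ∧ DecaysAtRadius F x I w l) ∧
        ∃ l, 0 < l ∧ l < 1 ∧ DecaysAtRadius F x I' w l) ↔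
      ∃ l, 0 < l ∧ l < 1 ∧ DecaysAtRadius F x (I ∪ I') w l := by
  constructor
  · rintro ⟨⟨l, hl0, hl1, h⟩, l', hl0', hl1', h'⟩
    have hm0 : 0 < max l l' := lt_max_of_lt_left hl0
    have hm1 : max l l' < 1 := max_lt hl1 hl1'
    have h_max := h.of_le hl0 (le_max_left l l') hm1.le
    have h_max' := h'.of_le hl0' (le_max_right l l') hm1.le
    rw [← Real.sq_sqrt hm0.le] at h_max h_max'
    have h_sqrt_pos : 0 < √(max l l') := Real.sqrt_pos.2 hm0
    have h_sqrt_lt : √(max l l') < 1 := (Real.sqrt_lt' one_pos).2 (by rwa [one_pow])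
    exact ⟨√(max l l'), h_sqrt_pos, h_sqrt_lt, .union_of_sq h_sqrt_pos h_max h_max'⟩
  · rintro ⟨l, hl0, hl1, h⟩
    exact ⟨⟨l, hl0, hl1, h.mono Finset.subset_union_left⟩,
      l, hl0, hl1, h.mono Finset.subset_union_right⟩

/-- Purity for overconvergence, claim 3(2): for subsets `I, I'` of `{0,…,s-1}`,
one has `A_I ∩ A_{I'} = A_{I ∪ I'}` as subsets of the functions `M → K`. -/
theorem inter_decay_eq_union_decay {K : Type*} [Field K] (v : AbsoluteValue K ℝ)
    (hv : IsNonarchimedean (v : K → ℝ))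
    (d s : ℕ) (hsd : s ≤ d)
    (I I' : Finset (Fin d)) (hI : ∀ i ∈ I, (i : ℕ) < s) (hI' : ∀ i ∈ I', (i : ℕ) < s) :
    {a : Mset d s → K | DecayCond v d s I a} ∩ {a : Mset d s → K | DecayCond v d s I' a}
      = {a : Mset d s → K | DecayCond v d s (I ∪ I') a} :=
  Set.ext fun a ↦ inter_decay_eq_union_decay_general cofinite (fun n : Mset d s ↦ n.1) I I'
    fun n ↦ v (a n)
end

section
/- Fix an integer q ≥ 2 (in the paper, q is a power of the residue characteristic p). Let R := {r : Fin d → ℤ | 0 ≤ r_i ≤ q−1 for all i}. For a : M → K and r ∈ R define the r-th q-section a_r : M → K by a_r(m) := a(q·m + r) (note q·m + r ∈ M whenever m ∈ M). Then for every subset I of {0,…,s−1}: a ∈ A_I if and only if a_r ∈ A_I for every r ∈ R. Equivalently, the map (b_r)_{r∈R} ↦ a, where a(q·m + r) := b_r(m) for m ∈ M and r ∈ R, is a bijection from (A_I)^R onto A_I. (This is the coefficientwise statement that A_{I,K} is freely generated, as a module over itself via the Frobenius lift t_i ↦ t_i^q, by the monomials t^n with 0 ≤ n_i ≤ q−1;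 in particular the Frobenius endomorphism of A_{I,K} is flat.) -/
open Filter

/-- The `r`-th `q`-section of `a : M → K`, namely `m ↦ a (q • m + r)`. -/
def qSection {K : Type*} [Field K] (d s : ℕ) (q : ℤ) (hq : 0 ≤ q)
    (r : Fin d → ℤ) (hr : ∀ i, 0 ≤ r i)
    (a : Mset d s → K) (m : Mset d s) : K :=
  a ⟨fun i => q * m.1 i + r i, fun i hi => add_nonneg (mul_nonneg hq (m.2 i hi)) (hr i)⟩

/-!
Writing `n = q m + r` with digits `0 ≤ r i < q` splits `M` into finitely many copies of itself, and
`λ ^ n_J = (λ ^ q) ^ m_J * λ ^ r_J`. Hence `a` decays with parameter `λ` exactly when every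
`q`-section of `a` decays with parameter `λ ^ q`. The parameters of the finitely many sections can
be made equal because decay with one parameter persists up to `1`: for `λ ≤ μ ≤ 1` the weight
`μ ^ k` is at most `1` for `k ≥ 0` and at most `λ ^ k` for `k ≤ 0`, and `J = ∅` is among the
conditions. So `D(I)` means decay for all `λ < 1` close to `1`, or equivalently with parameter
`λ ^ q` for all such `λ`, and this formulation commutes with finite conjunctions.
-/

open Topology

theorem tendsto_cofinite_iff_forall_comp {ι α β γ : Type*} [Finite ι] {φ : ι → α → β}
    (hinj : ∀ i, (φ i).Injective) (hcover : ∀ b, ∃ i a, φ i a = b) {f : β → γ} {F : Filter γ} :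
    Tendsto f cofinite F ↔ ∀ i, Tendsto (f ∘ φ i) cofinite F := by
  refine ⟨fun h i => h.comp (hinj i).tendsto_cofinite, fun h S hS => ?_⟩
  have hfin : (⋃ i, φ i '' {a | f (φ i a) ∉ S}).Finite :=
    Set.finite_iUnion fun i => Set.Finite.image _ (h i hS)
  refine hfin.subset fun b hb => ?_
  obtain ⟨i, a, rfl⟩ := hcover b
  exact Set.mem_iUnion.2 ⟨i, a, hb, rfl⟩

theorem zpow_le_one_add_zpow {𝕜 : Type*} [Field 𝕜] [LinearOrder 𝕜] [IsStrictOrderedRing 𝕜]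
    {x y : 𝕜} (hx : 0 < x) (hxy : x ≤ y) (hy : y ≤ 1) (k : ℤ) : y ^ k ≤ 1 + x ^ k := by
  have hy₀ : 0 < y := hx.trans_le hxy
  rcases le_total 0 k with hk | hk
  · exact (zpow_le_one₀ hy₀ hy hk).trans (le_add_of_nonneg_right (zpow_pos hx k).le)
  · have hinv : (y ^ (-k))⁻¹ ≤ (x ^ (-k))⁻¹ :=
      inv_anti₀ (zpow_pos hx _) (zpow_le_zpow_left₀ (neg_nonneg.2 hk) hx.le hxy)
    simp only [zpow_neg, inv_inv] at hinv
    exact hinv.trans (le_add_of_nonneg_left zero_le_one)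

theorem tendsto_zpow_nhdsLT_one {𝕜 : Type*} [Field 𝕜] [LinearOrder 𝕜] [IsStrictOrderedRing 𝕜]
    [TopologicalSpace 𝕜] [OrderTopology 𝕜] {q : ℤ} (hq : 0 < q) :
    Tendsto (fun x : 𝕜 => x ^ q) (𝓝[<] 1) (𝓝[<] 1) := by
  refine tendsto_nhdsWithin_iff.2 ⟨?_, ?_⟩
  · have hcont := (continuousAt_zpow₀ (1 : 𝕜) q (.inl one_ne_zero)).tendsto
    rw [one_zpow] at hcont
    exact hcont.mono_left nhdsWithin_le_nhds
  · filter_upwards [Ioo_mem_nhdsLT zero_lt_one] with x hx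
    exact zpow_lt_one₀ hx.1 hx.2 hq

namespace Mset

variable {d s : ℕ} {q : ℤ}

/-- The map `m ↦ q m + r` on `M`, along which the `q`-section with index `r` is the pullback. -/
def mulAdd (hq : 0 ≤ q) (r : Fin d → ℤ) (hr : ∀ i, 0 ≤ r i) (m : Mset d s) : Mset d s :=
  ⟨fun i => q * m.1 i + r i, fun i hi => add_nonneg (mul_nonneg hq (m.2 i hi)) (hr i)⟩

theorem mulAdd_injective (hq : 0 < q) (r : Fin d → ℤ) (hr : ∀ i, 0 ≤ r i) :
    Function.Injective (mulAdd (s := s) hq.le r hr) := fun _ _ h =>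
  Subtype.ext <| funext fun i =>
    mul_left_cancel₀ hq.ne' (add_right_cancel (congrFun (congrArg Subtype.val h) i))

theorem sum_mulAdd (hq : 0 ≤ q) (r : Fin d → ℤ) (hr : ∀ i, 0 ≤ r i) (m : Mset d s)
    (J : Finset (Fin d)) :
    ∑ i ∈ J, (mulAdd hq r hr m).1 i = q * ∑ i ∈ J, m.1 i + ∑ i ∈ J, r i := by
  simp only [mulAdd, Finset.sum_add_distrib, Finset.mul_sum]

end Mset

/-- The set `R` of digit vectors `r` with `0 ≤ r i ≤ q - 1`, which index the `q`-sections. -/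
abbrev DigitVector (d : ℕ) (q : ℤ) : Type :=
  {r : Fin d → ℤ // ∀ i, 0 ≤ r i ∧ r i ≤ q - 1}

namespace DigitVector

variable {d s : ℕ} {q : ℤ}

instance : Finite (DigitVector d q) :=
  (Set.finite_Icc (0 : Fin d → ℤ) (fun _ => q - 1)).subset
    fun _ hr => ⟨fun i => (hr i).1, fun i => (hr i).2⟩

theorem nonneg (r : DigitVector d q) (i : Fin d) : 0 ≤ r.1 i := (r.2 i).1

theorem exists_mulAdd_eq (hq : 0 < q) (n : Mset d s) :
    ∃ (r : DigitVector d q) (m : Mset d s), m.mulAdd hq.le r.1 r.nonneg = n :=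
  ⟨⟨fun i => n.1 i % q, fun _ =>
      ⟨Int.emod_nonneg _ hq.ne', Int.le_sub_one_of_lt (Int.emod_lt_of_pos _ hq)⟩⟩,
    ⟨fun i => n.1 i / q, fun i hi => Int.ediv_nonneg (n.2 i hi) hq.le⟩,
    Subtype.ext <| funext fun i => Int.mul_ediv_add_emod (n.1 i) q⟩

end DigitVector

/-- The decay condition on `f : M → ℝ` for a fixed parameter `l`; the condition `D(I)` on a
coefficient function `a` asks for it with `f = |a|` and some `l ∈ (0, 1)`. -/
def DecaysAt {d s : ℕ} (I : Finset (Fin d)) (f : Mset d s → ℝ) (l : ℝ) : Prop :=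
  ∀ J ⊆ I, Tendsto (fun n : Mset d s => f n * l ^ (∑ i ∈ J, n.1 i)) cofinite (𝓝 0)

namespace DecaysAt

variable {d s : ℕ} {I : Finset (Fin d)} {f : Mset d s → ℝ} {q : ℤ} {l : ℝ}

theorem mono {l' : ℝ} (h : DecaysAt I f l) (hf : 0 ≤ f) (hl : 0 < l) (hll' : l ≤ l')
    (hl' : l' ≤ 1) : DecaysAt I f l' := by
  intro J hJ
  have hl'₀ : 0 < l' := hl.trans_le hll'
  have hf₀ : Tendsto f cofinite (𝓝 0) := by simpa using h ∅ I.empty_subset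
  have hsum : Tendsto (fun n : Mset d s => f n * (1 + l ^ (∑ i ∈ J, n.1 i))) cofinite (𝓝 0) := by
    simpa only [mul_add, mul_one, add_zero] using hf₀.add (h J hJ)
  exact squeeze_zero (fun n => mul_nonneg (hf n) (zpow_pos hl'₀ _).le)
    (fun n => mul_le_mul_of_nonneg_left (zpow_le_one_add_zpow hl hll' hl' _) (hf n)) hsum

theorem exists_iff_eventually_zpow (hf : 0 ≤ f) (hq : 0 < q) :
    (∃ l, 0 < l ∧ l < 1 ∧ DecaysAt I f l) ↔ ∀ᶠ l in 𝓝[<] 1, DecaysAt I f (l ^ q) := by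
  constructor
  · rintro ⟨l, hl₀, hl₁, h⟩
    filter_upwards [tendsto_zpow_nhdsLT_one hq (Ioo_mem_nhdsLT hl₁)] with l' hl'
    exact h.mono hf hl₀ hl'.1.le hl'.2.le
  · intro h
    obtain ⟨l, h, hl₀, hl₁⟩ := (h.and (Ioo_mem_nhdsLT zero_lt_one)).exists
    exact ⟨l ^ q, zpow_pos hl₀ q, zpow_lt_one₀ hl₀ hl₁ hq, h⟩

theorem exists_iff_eventually (hf : 0 ≤ f) :
    (∃ l, 0 < l ∧ l < 1 ∧ DecaysAt I f l) ↔ ∀ᶠ l in 𝓝[<] 1, DecaysAt I f l := by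
  simpa only [zpow_one] using exists_iff_eventually_zpow hf one_pos

theorem comp_mulAdd_iff (hq : 0 ≤ q) (r : Fin d → ℤ) (hr : ∀ i, 0 ≤ r i) (hl : l ≠ 0) :
    DecaysAt I (f ∘ Mset.mulAdd hq r hr) (l ^ q) ↔
      ∀ J ⊆ I, Tendsto ((fun n : Mset d s => f n * l ^ (∑ i ∈ J, n.1 i)) ∘ Mset.mulAdd hq r hr)
        cofinite (𝓝 0) := by
  refine forall₂_congr fun J _ => ?_
  rw [← tendsto_const_smul_iff₀ (zpow_ne_zero (∑ i ∈ J, r i) hl), smul_zero]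
  refine tendsto_congr fun m => ?_
  simp only [Function.comp_apply, Mset.sum_mulAdd, zpow_add₀ hl, zpow_mul, smul_eq_mul]
  ring

theorem iff_forall_comp_mulAdd (hq : 0 < q) (hl : l ≠ 0) :
    DecaysAt I f l ↔
      ∀ r : DigitVector d q, DecaysAt I (f ∘ Mset.mulAdd hq.le r.1 r.nonneg) (l ^ q) := by
  have hsplit (J : Finset (Fin d)) :=
    tendsto_cofinite_iff_forall_comp (f := fun n : Mset d s => f n * l ^ (∑ i ∈ J, n.1 i))
      (F := 𝓝 0) (fun r : DigitVector d q => Mset.mulAdd_injective hq r.1 r.nonneg)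
      (DigitVector.exists_mulAdd_eq hq)
  simp only [comp_mulAdd_iff hq.le _ _ hl]
  simp only [DecaysAt, hsplit]
  exact ⟨fun h r J hJ => h J hJ r, fun h J hJ r => h r J hJ⟩

end DecaysAt

theorem decay_iff_forall_qSection_decay_general {K : Type*} [Field K] (v : AbsoluteValue K ℝ)
    (d s : ℕ) (q : ℤ) (hq : 0 < q) (I : Finset (Fin d)) (a : Mset d s → K) :
    DecayCond v d s I a ↔
      ∀ (r : Fin d → ℤ) (hr : ∀ i, 0 ≤ r i ∧ r i ≤ q - 1),
        DecayCond v d s I (qSection d s q hq.le r (fun i => (hr i).1) a) := by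
  have hv : 0 ≤ v ∘ a := fun n => v.nonneg (a n)
  calc DecayCond v d s I a
    _ ↔ ∀ᶠ l in 𝓝[<] 1, DecaysAt I (v ∘ a) l := DecaysAt.exists_iff_eventually hv
    _ ↔ ∀ᶠ l in 𝓝[<] 1, ∀ r : DigitVector d q,
          DecaysAt I (v ∘ a ∘ Mset.mulAdd hq.le r.1 r.nonneg) (l ^ q) := by
      refine eventually_congr ?_
      filter_upwards [Ioo_mem_nhdsLT zero_lt_one] with l hl
      exact DecaysAt.iff_forall_comp_mulAdd hq hl.1.ne'
    _ ↔ ∀ r : DigitVector d q, ∀ᶠ l in 𝓝[<] 1,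
          DecaysAt I (v ∘ a ∘ Mset.mulAdd hq.le r.1 r.nonneg) (l ^ q) := eventually_all
    _ ↔ ∀ r : DigitVector d q, DecayCond v d s I (qSection d s q hq.le r.1 r.nonneg a) :=
      forall_congr' fun r =>
        (DecaysAt.exists_iff_eventually_zpow (fun m => hv (m.mulAdd hq.le r.1 r.nonneg)) hq).symm
    _ ↔ _ := Subtype.forall

/-- `a` lies in `A_I` if and only if all of its `q`-sections `a_r`,
for `r : Fin d → ℤ` with `0 ≤ r i ≤ q - 1`, lie in `A_I`.  This is the
coefficientwise statement that `A_{I,K}` is freely generated over itself via the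
Frobenius lift `t_i ↦ t_i^q` by the monomials `t^n` with `0 ≤ n_i ≤ q-1`. -/
theorem decay_iff_forall_qSection_decay {K : Type*} [Field K] (v : AbsoluteValue K ℝ)
    (hv : IsNonarchimedean (v : K → ℝ))
    (d s : ℕ) (hsd : s ≤ d) (q : ℤ) (hq : 2 ≤ q)
    (I : Finset (Fin d)) (hI : ∀ i ∈ I, (i : ℕ) < s)
    (a : Mset d s → K) :
    DecayCond v d s I a ↔
      ∀ (r : Fin d → ℤ) (hr : ∀ i, 0 ≤ r i ∧ r i ≤ q - 1),
        DecayCond v d s I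
          (qSection d s q (by omega) r (fun i => (hr i).1) a) :=
  decay_iff_forall_qSection_decay_general v d s q (by omega) I a
end

section
/- Let D be a commutative ring, let B and C be subrings of D, and set A := B ∩ C (a subring of D). Let M be a finitely generated projective A-module. Consider the natural A-linear maps ι : M → D ⊗_A M, ι_B : B ⊗_A M → D ⊗_A M and ι_C : C ⊗_A M → D ⊗_A M (induced by the inclusions A ⊆ B ⊆ D and A ⊆ C ⊆ D). Then, inside D ⊗_A M, the image of ι equals the intersection of the image of ι_B with the image of ι_C; that is, range(ι_B) ∩ range(ι_C) = range(ι). -/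
open TensorProduct

section IntersectionDescent

variable {D : Type*} [CommRing D] (B C : Subring D)

/-- The subring `B` of `D` as an algebra over the subring `A := B ⊓ C`,
via the inclusion `B ⊓ C ≤ B`. -/
instance algebraInfLeft : Algebra ↥(B ⊓ C) ↥B :=
  (Subring.inclusion (inf_le_left : B ⊓ C ≤ B)).toAlgebra

/-- The subring `C` of `D` as an algebra over the subring `A := B ⊓ C`,
via the inclusion `B ⊓ C ≤ C`. -/
instance algebraInfRight : Algebra ↥(B ⊓ C) ↥C :=
  (Subring.inclusion (inf_le_right : B ⊓ C ≤ C)).toAlgebra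

/-- The inclusion `B → D` as a `(B ⊓ C)`-linear map. -/
def inclLeft : ↥B →ₗ[↥(B ⊓ C)] D where
  toFun x := (x : D)
  map_add' _ _ := rfl
  map_smul' _ _ := rfl

/-- The inclusion `C → D` as a `(B ⊓ C)`-linear map. -/
def inclRight : ↥C →ₗ[↥(B ⊓ C)] D where
  toFun x := (x : D)
  map_add' _ _ := rfl
  map_smul' _ _ := rfl

/-! A flat module preserves the exactness of `0 → A → B ⊕ C → D`. Concretely, for linear maps `f`
and `g` into `P`, the intersection of their images is `f (ker π)`, where `π` is `f` followed by the
quotient map `P → P ⧸ range g`; tensoring with `M` commutes with the quotient by right exactness and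
with the kernel by flatness. -/

section Flat

open LinearMap

variable {R : Type*} [CommRing R] (M : Type*) [AddCommGroup M] [Module R M]
  {N N' P K : Type*} [AddCommGroup N] [AddCommGroup N'] [AddCommGroup P] [AddCommGroup K]
  [Module R N] [Module R N'] [Module R P] [Module R K]

theorem comap_rTensor_range_rTensor [Module.Flat R M] (f : N →ₗ[R] P) (g : N' →ₗ[R] P) :
    (range (g.rTensor M)).comap (f.rTensor M) =
      range (((range g).comap f).subtype.rTensor M) := by
  have exact_mkQ : Function.Exact (g.rTensor M) ((range g).mkQ.rTensor M) :=
    rTensor_exact M g.exact_map_mkQ_range (range g).mkQ_surjective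
  have ker_mkQ_comp : ker ((range g).mkQ ∘ₗ f) = (range g).comap f := by
    rw [ker_comp, Submodule.ker_mkQ]
  have exact_subtype : Function.Exact (((range g).comap f).subtype.rTensor M)
      (((range g).mkQ ∘ₗ f).rTensor M) :=
    Module.Flat.rTensor_exact M (exact_iff.mpr (by rw [ker_mkQ_comp, Submodule.range_subtype]))
  rw [← exact_mkQ.linearMap_ker_eq, ← ker_comp, ← rTensor_comp, exact_subtype.linearMap_ker_eq]

theorem range_rTensor_inf_range_rTensor [Module.Flat R M] {f : N →ₗ[R] P} {g : N' →ₗ[R] P}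
    {h : K →ₗ[R] P} (range_h : range h = range f ⊓ range g) :
    range (f.rTensor M) ⊓ range (g.rTensor M) = range (h.rTensor M) := by
  have range_f_comp : range (f ∘ₗ ((range g).comap f).subtype) = range h := by
    rw [range_comp, Submodule.range_subtype, Submodule.map_comap_eq, range_h]
  calc range (f.rTensor M) ⊓ range (g.rTensor M)
    _ = ((range (g.rTensor M)).comap (f.rTensor M)).map (f.rTensor M) :=
      (Submodule.map_comap_eq _ _).symm
    _ = range ((f ∘ₗ ((range g).comap f).subtype).rTensor M) := by
      rw [comap_rTensor_range_rTensor, rTensor_comp, range_comp]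
    _ = range (h.rTensor M) := by
      rw [rTensor_range, range_f_comp, ← rTensor_range]

end Flat

theorem range_rTensor_algebraLinearMap (R S M : Type*) [CommSemiring R] [Semiring S] [Algebra R S]
    [AddCommMonoid M] [Module R M] :
    LinearMap.range ((Algebra.linearMap R S).rTensor M) =
      LinearMap.range (TensorProduct.mk R S M 1) := by
  have rTensor_comp_lid_symm : (Algebra.linearMap R S).rTensor M ∘ₗ (TensorProduct.lid R M).symm =
      TensorProduct.mk R S M 1 := by
    ext m
    simp
  rw [← rTensor_comp_lid_symm, LinearEquiv.range_comp]

theorem range_inclLeft_inf_range_inclRight :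
    LinearMap.range (inclLeft B C) ⊓ LinearMap.range (inclRight B C) =
      LinearMap.range (Algebra.linearMap ↥(B ⊓ C) D) := by
  ext d
  constructor
  · rintro ⟨⟨b, rfl⟩, ⟨c, (c_eq_b : (c : D) = b)⟩⟩
    have b_mem_C : (b : D) ∈ C := c_eq_b ▸ c.2
    exact ⟨⟨b, b.2, b_mem_C⟩, rfl⟩
  · rintro ⟨a, rfl⟩
    exact ⟨⟨⟨a, a.2.1⟩, rfl⟩, ⟨⟨a, a.2.2⟩, rfl⟩⟩

theorem range_inter_range_eq_range_general
    (M : Type*) [AddCommGroup M] [Module ↥(B ⊓ C) M] [Module.Flat ↥(B ⊓ C) M] :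
    LinearMap.range (LinearMap.rTensor M (inclLeft B C))
        ⊓ LinearMap.range (LinearMap.rTensor M (inclRight B C))
      = LinearMap.range (TensorProduct.mk ↥(B ⊓ C) D M 1) := by
  rw [← range_rTensor_algebraLinearMap]
  exact range_rTensor_inf_range_rTensor M (range_inclLeft_inf_range_inclRight B C).symm

/-- Let `B, C` be subrings of a commutative ring `D` and `A := B ⊓ C`.  For a
finitely generated projective `A`-module `M`, inside `D ⊗[A] M` the intersection
of the image of `B ⊗[A] M` with the image of `C ⊗[A] M` equals the image of `M`
(the image of the map `m ↦ 1 ⊗ m`). -/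
theorem range_inter_range_eq_range
    (M : Type*) [AddCommGroup M] [Module ↥(B ⊓ C) M]
    [Module.Finite ↥(B ⊓ C) M] [Module.Projective ↥(B ⊓ C) M] :
    LinearMap.range (LinearMap.rTensor M (inclLeft B C))
        ⊓ LinearMap.range (LinearMap.rTensor M (inclRight B C))
      = LinearMap.range (TensorProduct.mk ↥(B ⊓ C) D M 1) :=
  range_inter_range_eq_range_general B C M

end IntersectionDescent
end
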